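/- Let v > 0 and q ∈ ℝ with q ≤ v, let W be a d×d real symmetric positive definite matrix and R a d×d real symmetric matrix with W − R positive semidefinite, and let t ≥ 0. Set ξ = v⁻¹(R − q·v⁻¹·W), A(t) = v⁻¹W + tI, and ρ(t) = A(t)^{−1/2} ξ A(t)^{−1/2}. Then 3(v − q)·tr(ρ(t)²) − 2v·tr(ρ(t)³) ≥ 0. -/

import Mathlib

open Matrix
open scoped Classical

open scoped MatrixOrder in
/-- `A^(-1/2)`: the inverse of the unique positive semidefinite square root of `A`
(junk value `0` if `A` is not positive semidefinite). -/
noncomputable def invSqrt {d : ℕ} (A : Matrix (Fin d) (Fin d) ℝ) : Matrix (Fin d) (Fin d) ℝ :=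
  if h : A.PosSemidef then (CFC.sqrt A)⁻¹ else 0

/-!
Conjugating `(v - q) A - v ξ = (W - R) + (v - q) t I ⪰ 0` by `A^(-1/2)` gives `v ρ ⪯ (v - q) I`.
Conjugating once more, by the symmetric matrix `ρ`, and taking traces gives
`v tr(ρ³) ≤ (v - q) tr(ρ²)`; since `(v - q) tr(ρ²) ≥ 0`, the factor `3` on the right may be
larger than the factor `2` on the left.
-/

section InvSqrt

open scoped MatrixOrder

variable {d : ℕ}

theorem isHermitian_invSqrt (A : Matrix (Fin d) (Fin d) ℝ) : (invSqrt A).IsHermitian := by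
  unfold invSqrt
  split_ifs
  · exact (CFC.sqrt_nonneg A).posSemidef.isHermitian.inv
  · exact isHermitian_zero

theorem invSqrt_mul_self_mul_invSqrt {A : Matrix (Fin d) (Fin d) ℝ} (hA : A.PosDef) :
    invSqrt A * A * invSqrt A = 1 := by
  have hdet : IsUnit (CFC.sqrt A).det :=
    (isUnit_iff_isUnit_det _).mp
      ((CFC.isUnit_sqrt_iff A hA.posSemidef.nonneg).mpr hA.isUnit)
  calc
    invSqrt A * A * invSqrt A
        = (CFC.sqrt A)⁻¹ * (CFC.sqrt A * CFC.sqrt A) * (CFC.sqrt A)⁻¹ := by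
      rw [invSqrt, dif_pos hA.posSemidef, CFC.sqrt_mul_sqrt_self A hA.posSemidef.nonneg]
    _ = 1 := by
      rw [nonsing_inv_mul_cancel_left _ _ hdet, mul_nonsing_inv _ hdet]

end InvSqrt

section Trace

variable {n 𝕜 : Type*} [Fintype n] [CommRing 𝕜] [PartialOrder 𝕜] [StarRing 𝕜]
  [StarOrderedRing 𝕜]

theorem trace_mul_self_nonneg {ρ : Matrix n n 𝕜} (hρ : ρ.IsHermitian) : 0 ≤ (ρ * ρ).trace := by
  simpa only [hρ.eq] using (posSemidef_conjTranspose_mul_self ρ).trace_nonneg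

theorem mul_trace_cube_le_mul_trace_sq [DecidableEq n] {ρ : Matrix n n 𝕜} {a b : 𝕜}
    (hρ : ρ.IsHermitian) (h : (a • 1 - b • ρ).PosSemidef) :
    b * (ρ * ρ * ρ).trace ≤ a * (ρ * ρ).trace := by
  have hconj : ρᴴ * (a • 1 - b • ρ) * ρ = a • (ρ * ρ) - b • (ρ * ρ * ρ) := by
    simp only [hρ.eq, Matrix.mul_sub, Matrix.sub_mul, Matrix.mul_smul, Matrix.smul_mul,
      Matrix.mul_one]
  have htrace := (h.conjTranspose_mul_mul_same ρ).trace_nonneg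
  rwa [hconj, trace_sub, trace_smul, trace_smul, smul_eq_mul, smul_eq_mul, sub_nonneg] at htrace

end Trace

theorem posSemidef_smul_one_sub_smul_conj {n 𝕜 : Type*} [Fintype n] [DecidableEq n] [CommRing 𝕜]
    [PartialOrder 𝕜] [StarRing 𝕜] {A S X : Matrix n n 𝕜} {a b : 𝕜} (hS : S.IsHermitian)
    (hSA : S * A * S = 1) (h : (a • A - b • X).PosSemidef) :
    (a • 1 - b • (S * X * S)).PosSemidef := by
  have hconj : Sᴴ * (a • A - b • X) * S = a • 1 - b • (S * X * S) := by
    simp only [hS.eq, Matrix.mul_sub, Matrix.sub_mul, Matrix.mul_smul, Matrix.smul_mul, hSA]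
  exact hconj ▸ h.conjTranspose_mul_mul_same S

theorem smul_inv_smul_add_sub_smul_inv_smul_sub {K M : Type*} [Field K] [AddCommGroup M]
    [Module K M] {v : K} (hv : v ≠ 0) (q : K) (W R T : M) :
    (v - q) • (v⁻¹ • W + T) - v • (v⁻¹ • (R - (q * v⁻¹) • W)) = W - R + (v - q) • T := by
  match_scalars <;> field_simp
  ring

theorem isHermitian_of_isHermitian_smul_one_sub_smul {n K : Type*} [DecidableEq n] [Field K]
    [StarRing K] [TrivialStar K] {ρ : Matrix n n K} {a b : K} (hb : b ≠ 0)
    (h : (a • 1 - b • ρ).IsHermitian) : ρ.IsHermitian := by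
  let := invertibleOfNonzero hb
  have hsmul : (b • ρ).IsHermitian := by
    simpa only [sub_sub_cancel] using (isHermitian_one.smul (.all a)).sub h
  exact hsmul.of_smul (.all b)

theorem trace_inequality_general {d : ℕ} {v q α β : ℝ} {W R T : Matrix (Fin d) (Fin d) ℝ}
    (hv : v ≠ 0) (hq : q ≤ v) (hβ : 0 ≤ β) (hβα : β ≤ α) (hA : (v⁻¹ • W + T).PosDef)
    (hWR : (W - R).PosSemidef) (hT : T.PosSemidef) :
    let ρ : Matrix (Fin d) (Fin d) ℝ :=
      invSqrt (v⁻¹ • W + T) * (v⁻¹ • (R - (q * v⁻¹) • W)) * invSqrt (v⁻¹ • W + T)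
    0 ≤ α * (v - q) * (ρ * ρ).trace - β * v * (ρ * ρ * ρ).trace := by
  intro ρ
  have hvq : 0 ≤ v - q := sub_nonneg.mpr hq
  have hξ : ((v - q) • (v⁻¹ • W + T) - v • (v⁻¹ • (R - (q * v⁻¹) • W))).PosSemidef := by
    rw [smul_inv_smul_add_sub_smul_inv_smul_sub hv]
    exact hWR.add (hT.smul hvq)
  have hρ_le : ((v - q) • 1 - v • ρ).PosSemidef :=
    posSemidef_smul_one_sub_smul_conj (isHermitian_invSqrt _)
      (invSqrt_mul_self_mul_invSqrt hA) hξ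
  have hρ : ρ.IsHermitian := isHermitian_of_isHermitian_smul_one_sub_smul hv hρ_le.isHermitian
  have hcube : v * (ρ * ρ * ρ).trace ≤ (v - q) * (ρ * ρ).trace :=
    mul_trace_cube_le_mul_trace_sq hρ hρ_le
  have hsq : 0 ≤ (v - q) * (ρ * ρ).trace := mul_nonneg hvq (trace_mul_self_nonneg hρ)
  refine sub_nonneg.mpr ?_
  calc
    β * v * (ρ * ρ * ρ).trace = β * (v * (ρ * ρ * ρ).trace) := mul_assoc ..
    _ ≤ β * ((v - q) * (ρ * ρ).trace) := by gcongr
    _ ≤ α * ((v - q) * (ρ * ρ).trace) := by gcongr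
    _ = α * (v - q) * (ρ * ρ).trace := (mul_assoc ..).symm

/-- With `ξ = v⁻¹(R - q v⁻¹ W)`, `A(t) = v⁻¹ W + t I`, `ρ(t) = A(t)^(-1/2) ξ A(t)^(-1/2)`,
we have `3(v - q) tr(ρ(t)²) - 2v tr(ρ(t)³) ≥ 0`. -/
theorem trace_inequality {d : ℕ} (v q t : ℝ) (W R : Matrix (Fin d) (Fin d) ℝ)
    (hv : 0 < v) (hq : q ≤ v) (hW : W.PosDef) (hR : R.IsSymm)
    (hWR : (W - R).PosSemidef) (ht : 0 ≤ t) :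
    let ρ : Matrix (Fin d) (Fin d) ℝ :=
      invSqrt (v⁻¹ • W + t • 1) * (v⁻¹ • (R - (q * v⁻¹) • W)) * invSqrt (v⁻¹ • W + t • 1)
    0 ≤ 3 * (v - q) * (ρ * ρ).trace - 2 * v * (ρ * ρ * ρ).trace := by
  exact trace_inequality_general hv.ne' hq (by norm_num) (by norm_num)
    ((hW.smul (inv_pos.mpr hv)).add_posSemidef (.smul .one ht)) hWR (.smul .one ht)
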